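/- arXiv:2209.14124 — 3 statements merged into one kernel-verified Lean document; each statement's English description precedes it below -/
import Mathlib

section
/- There exists a constant C > 0, independent of x₁ and Δx, such that for all x ∈ (x₁, x₁ + Δx) one has |W′(x)| ≤ C/Δx and |W″(x)| ≤ C/Δx². Moreover, on the subinterval (x₁, x₁ + Δx/3) the sharper bound |W′(x)| < 5/Δx holds. -/
/-!
On the open interval put `A = Δx / (x - x₁)` and `B = Δx / (x₁ + Δx - x)`; then `A, B > 1`,
`A + B = A * B`, and `W` is the logistic function of `B - A`. With `E = W - W ^ 2` this gives
`W' = E (A² + B²) / Δx` and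
`W'' = (E (1 - 2 W) (A² + B²)² + 2 E (B³ - A³)) / Δx²`.
Since `E ≤ exp (-|A - B|)` and the smaller of `A`, `B` is at most `2`, it follows that
`E ≤ 9 exp (-max A B)`; the exponential beats every power of `max A B`, so both numerators are
bounded by an absolute constant. On the first third of the interval `A > 3` and `B < 3/2`, and
`E < exp (3/2 - A)` together with `exp v ≥ 1 + v + v² / 2` yields the constant `5`.
-/

open Real

noncomputable def W (x₁ Δx : ℝ) (x : ℝ) : ℝ :=
  if x ≤ x₁ then 0
  else if x < x₁ + Δx then
    1 / (Real.exp (Δx / (x - x₁) + Δx / (x - x₁ - Δx)) + 1)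
  else 1

theorem W_eq_on {x₁ Δx x : ℝ} (hx : x ∈ Set.Ioo x₁ (x₁ + Δx)) :
    W x₁ Δx x = 1 / (Real.exp (Δx / (x - x₁) + Δx / (x - x₁ - Δx)) + 1) := by
  unfold W
  rw [if_neg (not_le.mpr hx.1), if_pos hx.2]

theorem W_hasDerivAt {x₁ Δx x : ℝ} (hx : x ∈ Set.Ioo x₁ (x₁ + Δx)) :
    HasDerivAt (W x₁ Δx)
      ((W x₁ Δx x - W x₁ Δx x ^ 2) * (Δx / (x - x₁) ^ 2 + Δx / (x - x₁ - Δx) ^ 2)) x := by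
  have h1 : x - x₁ ≠ 0 := by
    have : 0 < x - x₁ := by linarith [hx.1]
    exact this.ne'
  have h2 : x - x₁ - Δx ≠ 0 := by
    have : x - x₁ - Δx < 0 := by linarith [hx.2]
    exact this.ne
  have d1 : HasDerivAt (fun z : ℝ => z - x₁) 1 x := (hasDerivAt_id x).sub_const x₁
  have d2 : HasDerivAt (fun z : ℝ => z - x₁ - Δx) 1 x := d1.sub_const Δx
  have d3 := ((hasDerivAt_const x Δx).fun_div d1 h1).fun_add
    ((hasDerivAt_const x Δx).fun_div d2 h2)
  have hp := Real.exp_pos (Δx / (x - x₁) + Δx / (x - x₁ - Δx))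
  have d4 := (hasDerivAt_const x (1 : ℝ)).fun_div (d3.exp.add_const 1) (by positivity)
  have hev : W x₁ Δx =ᶠ[nhds x]
      fun z => 1 / (Real.exp (Δx / (z - x₁) + Δx / (z - x₁ - Δx)) + 1) := by
    filter_upwards [isOpen_Ioo.mem_nhds hx] with z hz using W_eq_on hz
  refine (d4.congr_of_eventuallyEq hev).congr_deriv ?_
  rw [W_eq_on hx]
  generalize Real.exp (Δx / (x - x₁) + Δx / (x - x₁ - Δx)) = p at hp
  have : p + 1 ≠ 0 := by positivity
  field_simp
  ring

theorem W_hasDerivAt_deriv {x₁ Δx x : ℝ} (hx : x ∈ Set.Ioo x₁ (x₁ + Δx)) :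
    HasDerivAt (deriv (W x₁ Δx))
      ((W x₁ Δx x - W x₁ Δx x ^ 2) * (1 - 2 * W x₁ Δx x)
          * (Δx / (x - x₁) ^ 2 + Δx / (x - x₁ - Δx) ^ 2) ^ 2
        + (W x₁ Δx x - W x₁ Δx x ^ 2)
          * (-2 * Δx / (x - x₁) ^ 3 - 2 * Δx / (x - x₁ - Δx) ^ 3)) x := by
  have h1 : x - x₁ ≠ 0 := by
    have : 0 < x - x₁ := by linarith [hx.1]
    exact this.ne'
  have h2 : x - x₁ - Δx ≠ 0 := by
    have : x - x₁ - Δx < 0 := by linarith [hx.2]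
    exact this.ne
  have d1 : HasDerivAt (fun z : ℝ => z - x₁) 1 x := (hasDerivAt_id x).sub_const x₁
  have d2 : HasDerivAt (fun z : ℝ => z - x₁ - Δx) 1 x := d1.sub_const Δx
  have d3 := ((hasDerivAt_const x Δx).fun_div (d1.fun_pow 2) (pow_ne_zero 2 h1)).fun_add
    ((hasDerivAt_const x Δx).fun_div (d2.fun_pow 2) (pow_ne_zero 2 h2))
  have dW := W_hasDerivAt hx
  have d4 := (dW.fun_sub (dW.fun_pow 2)).fun_mul d3
  have hev : deriv (W x₁ Δx) =ᶠ[nhds x]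
      fun z => (W x₁ Δx z - W x₁ Δx z ^ 2) * (Δx / (z - x₁) ^ 2 + Δx / (z - x₁ - Δx) ^ 2) := by
    filter_upwards [isOpen_Ioo.mem_nhds hx] with z hz using (W_hasDerivAt hz).deriv
  refine (d4.congr_of_eventuallyEq hev).congr_deriv ?_
  generalize W x₁ Δx x = s
  generalize x - x₁ - Δx = v at h2 ⊢
  generalize x - x₁ = u at h1 ⊢
  field_simp
  ring

/-- The two derivatives in the variables `A = Δx / (x - x₁)`, `B = Δx / (x₁ + Δx - x)`, `s = W x`,
with the decay of `s - s ^ 2` away from the centre of the interval. -/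
theorem W_normal_form {x₁ Δx x : ℝ} (hΔ : 0 < Δx) (hx : x ∈ Set.Ioo x₁ (x₁ + Δx)) :
    ∃ A B s : ℝ, A = Δx / (x - x₁) ∧ 1 < A ∧ 1 < B ∧ A + B = A * B ∧ 0 < s ∧ s < 1 ∧
      s - s ^ 2 < Real.exp (B - A) ∧ s - s ^ 2 < Real.exp (A - B) ∧
      deriv (W x₁ Δx) x = (s - s ^ 2) * (A ^ 2 + B ^ 2) / Δx ∧
      deriv (deriv (W x₁ Δx)) x =
        ((s - s ^ 2) * (1 - 2 * s) * (A ^ 2 + B ^ 2) ^ 2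
          + 2 * (s - s ^ 2) * (B ^ 3 - A ^ 3)) / Δx ^ 2 := by
  have h1 : 0 < x - x₁ := by linarith [hx.1]
  have h2 : 0 < x₁ + Δx - x := by linarith [hx.2]
  have hs := W_eq_on hx
  have hy : Δx / (x - x₁) + Δx / (x - x₁ - Δx) = Δx / (x - x₁) - Δx / (x₁ + Δx - x) := by
    rw [show x - x₁ - Δx = -(x₁ + Δx - x) by ring, div_neg]; ring
  rw [hy] at hs
  have hneg : x - x₁ - Δx = -(x₁ + Δx - x) := by ring
  refine ⟨Δx / (x - x₁), Δx / (x₁ + Δx - x), W x₁ Δx x, rfl, ?_, ?_, ?_, ?_, ?_, ?_, ?_, ?_, ?_⟩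
  · rw [one_lt_div h1]; linarith
  · rw [one_lt_div h2]; linarith
  · field_simp; ring
  · rw [hs]; positivity
  · rw [hs, div_lt_one (by positivity)]
    linarith [Real.exp_pos (Δx / (x - x₁) - Δx / (x₁ + Δx - x))]
  · rw [hs, show Δx / (x₁ + Δx - x) - Δx / (x - x₁) = -(Δx / (x - x₁) - Δx / (x₁ + Δx - x)) by ring,
      Real.exp_neg]
    have hp := Real.exp_pos (Δx / (x - x₁) - Δx / (x₁ + Δx - x))
    generalize Real.exp (Δx / (x - x₁) - Δx / (x₁ + Δx - x)) = p at hp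
    rw [show 1 / (p + 1) - (1 / (p + 1)) ^ 2 = p / (p + 1) ^ 2 by field_simp; ring, inv_eq_one_div,
      div_lt_div_iff₀ (by positivity) hp]
    nlinarith
  · rw [hs]
    have hp := Real.exp_pos (Δx / (x - x₁) - Δx / (x₁ + Δx - x))
    generalize Real.exp (Δx / (x - x₁) - Δx / (x₁ + Δx - x)) = p at hp
    rw [show 1 / (p + 1) - (1 / (p + 1)) ^ 2 = p / (p + 1) ^ 2 by field_simp; ring,
      div_lt_iff₀ (by positivity)]
    nlinarith [pow_pos hp 2, pow_pos hp 3]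
  · rw [(W_hasDerivAt hx).deriv, hneg]
    generalize W x₁ Δx x = s
    generalize x₁ + Δx - x = v at h2 ⊢
    generalize x - x₁ = u at h1 ⊢
    rw [neg_sq]
    field_simp
  · rw [(W_hasDerivAt_deriv hx).deriv, hneg]
    generalize W x₁ Δx x = s
    generalize x₁ + Δx - x = v at h2 ⊢
    generalize x - x₁ = u at h1 ⊢
    rw [neg_sq, Odd.neg_pow (by decide : Odd 3)]
    field_simp
    ring

/-- The numerators of the two derivatives are bounded. Here `M` and `m` are the larger and the
smaller of `A` and `B`, so the lemma serves both halves of the interval. -/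
theorem numerators_bound {M m s : ℝ} (hm : 1 < m) (hmM : m ≤ M) (hMm : M + m = M * m)
    (hs : 0 < s) (hs1 : s < 1) (hE : s - s ^ 2 < Real.exp (m - M)) :
    (s - s ^ 2) * (M ^ 2 + m ^ 2) ≤ 1000 ∧
    |(s - s ^ 2) * (1 - 2 * s)| * (M ^ 2 + m ^ 2) ^ 2
      + 2 * (s - s ^ 2) * (M ^ 3 - m ^ 3) ≤ 1000 := by
  have hm2 : m ≤ 2 := by nlinarith
  have hM : 0 < M := by linarith
  have hE0 : 0 < s - s ^ 2 := by nlinarith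
  have he2 : Real.exp 2 < 9 := by
    rw [show (2 : ℝ) = 1 + 1 by norm_num, Real.exp_add]
    nlinarith [Real.exp_one_lt_d9, Real.exp_pos 1]
  have hEM : (s - s ^ 2) * Real.exp M ≤ 9 := by
    calc (s - s ^ 2) * Real.exp M ≤ Real.exp (m - M) * Real.exp M := by gcongr
      _ = Real.exp m := by rw [← Real.exp_add]; congr 1; ring
      _ ≤ Real.exp 2 := Real.exp_le_exp.mpr hm2
      _ ≤ 9 := he2.le
  have key : ∀ n : ℕ, (s - s ^ 2) * M ^ n ≤ 9 * (n.factorial : ℝ) := by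
    intro n
    have h := Real.pow_div_factorial_le_exp M hM.le n
    have hf : (0 : ℝ) < n.factorial := by exact_mod_cast n.factorial_pos
    rw [div_le_iff₀ hf] at h
    calc (s - s ^ 2) * M ^ n ≤ (s - s ^ 2) * (Real.exp M * n.factorial) := by gcongr
      _ = (s - s ^ 2) * Real.exp M * n.factorial := by ring
      _ ≤ 9 * n.factorial := by gcongr
  have k2 := key 2
  have k3 := key 3
  have k4 := key 4
  norm_num [Nat.factorial] at k2 k3 k4
  have hmM2 : m ^ 2 ≤ M ^ 2 := by gcongr
  have hm3 : 0 < m ^ 3 := by positivity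
  constructor
  · nlinarith
  · have habs : |(s - s ^ 2) * (1 - 2 * s)| ≤ s - s ^ 2 := by
      rw [abs_mul, abs_of_pos hE0]
      have : |1 - 2 * s| ≤ 1 := abs_le.mpr ⟨by linarith, by linarith⟩
      nlinarith
    have hq : (M ^ 2 + m ^ 2) ^ 2 ≤ 4 * M ^ 4 := by nlinarith [sq_nonneg m]
    have h4 : |(s - s ^ 2) * (1 - 2 * s)| * (M ^ 2 + m ^ 2) ^ 2 ≤ (s - s ^ 2) * (4 * M ^ 4) := by
      gcongr
    nlinarith [mul_pos hE0 hm3]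

theorem W_deriv_bounds :
    ∃ C : ℝ, 0 < C ∧
      ∀ x₁ Δx : ℝ, 0 < Δx →
        (∀ x ∈ Set.Ioo x₁ (x₁ + Δx),
          |deriv (W x₁ Δx) x| ≤ C / Δx ∧
          |deriv (deriv (W x₁ Δx)) x| ≤ C / Δx ^ 2) ∧
        (∀ x ∈ Set.Ioo x₁ (x₁ + Δx / 3),
          |deriv (W x₁ Δx) x| < 5 / Δx) := by
  refine ⟨1000, by norm_num, fun x₁ Δx hΔ => ⟨fun x hx => ?_, fun x hx => ?_⟩⟩
  · obtain ⟨A, B, s, -, hA, hB, hAB, hs, hs1, hE1, hE2, hd, hdd⟩ := W_normal_form hΔ hx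
    have hE0 : 0 < s - s ^ 2 := by nlinarith
    have hmain : (s - s ^ 2) * (A ^ 2 + B ^ 2) ≤ 1000 ∧
        |(s - s ^ 2) * (1 - 2 * s)| * (A ^ 2 + B ^ 2) ^ 2
          + 2 * (s - s ^ 2) * |B ^ 3 - A ^ 3| ≤ 1000 := by
      rcases le_total B A with h | h
      · have h3 : B ^ 3 ≤ A ^ 3 := by gcongr
        rw [abs_of_nonpos (by linarith : B ^ 3 - A ^ 3 ≤ 0), neg_sub]
        exact numerators_bound hB h hAB hs hs1 hE1
      · have h3 : A ^ 3 ≤ B ^ 3 := by gcongr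
        rw [abs_of_nonneg (by linarith : 0 ≤ B ^ 3 - A ^ 3), add_comm (A ^ 2)]
        exact numerators_bound hA h (by linarith) hs hs1 hE2
    rw [hd, hdd, abs_div, abs_div, abs_of_pos hΔ, abs_of_pos (pow_pos hΔ 2)]
    constructor
    · rw [abs_of_pos (by positivity)]
      gcongr
      exact hmain.1
    · gcongr
      refine (abs_add_le _ _).trans ?_
      rw [abs_mul, abs_of_nonneg (sq_nonneg (A ^ 2 + B ^ 2)), abs_mul (2 * (s - s ^ 2)),
        abs_of_pos (by positivity : 0 < 2 * (s - s ^ 2))]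
      exact hmain.2
  · have hx' : x ∈ Set.Ioo x₁ (x₁ + Δx) := ⟨hx.1, by linarith [hx.2]⟩
    obtain ⟨A, B, s, hAdef, hA, hB, hAB, hs, hs1, hE1, -, hd, -⟩ := W_normal_form hΔ hx'
    have hE0 : 0 < s - s ^ 2 := by nlinarith
    have hA3 : 3 < A := by
      rw [hAdef, lt_div_iff₀ (by linarith [hx.1])]
      linarith [hx.2]
    have hB2 : B < 3 / 2 := by nlinarith
    rw [hd, abs_of_pos (by positivity)]
    gcongr
    have hv := Real.quadratic_le_exp_of_nonneg (by linarith : 0 ≤ A - B)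
    have hprod : (s - s ^ 2) * Real.exp (A - B) < 1 := by
      calc (s - s ^ 2) * Real.exp (A - B) < Real.exp (B - A) * Real.exp (A - B) := by gcongr
        _ = 1 := by rw [← Real.exp_add]; simp
    -- `A² + B² ≤ (5/4) A²`, and `A² / 4 ≤ 1 + v + v² / 2` for `v = A - B ≥ A - 3/2`.
    have hq : A ^ 2 + B ^ 2 ≤ 5 * Real.exp (A - B) := by nlinarith
    calc (s - s ^ 2) * (A ^ 2 + B ^ 2) ≤ (s - s ^ 2) * (5 * Real.exp (A - B)) := by gcongr
      _ = 5 * ((s - s ^ 2) * Real.exp (A - B)) := by ring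
      _ < 5 := by linarith
end

section
/- There exists a constant C > 0, independent of x₁, Δx, ε and f₃, such that the following holds: if f₃ : ℝ → ℝ is twice continuously differentiable with f₃(x₁) = 0, f₃′(x₁) = 0 and |f₃″(x)| ≤ ε for all x ∈ [x₁, x₁ + Δx], then the function f = f₃·W satisfies |f(x)| ≤ C·ε·Δx², |f′(x)| ≤ C·ε·Δx and |f″(x)| ≤ C·ε for all x ∈ (x₁, x₁ + Δx). -/
/-!
After the rescaling `t = (x - x₁) / Δx` the transition function becomes the fixed function
`stepFn t = 1 / (exp (1/t + 1/(t-1)) + 1)` on `(0, 1)`, whose first two derivatives are bounded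
there by an absolute constant `K`. Indeed, with `y = 1/t + 1/(t-1)` and `s = stepFn`, one has
`s' = -y' s (1-s)` and `s'' = (-y'' + y'² (1-2s)) s (1-s)`. If `M = max (1/t) (1/(1-t))`, then the
smaller of the two reciprocals is at most `2`, so `|y| ≥ M - 2` and `s (1-s) ≤ exp (2-M)`, which
beats the polynomial growth `|y'| ≤ 2M²`, `|y''| ≤ 4M³`.

The mean value inequality, applied twice from `x₁`, gives `|f₃'| ≤ ε Δx` and `|f₃| ≤ ε Δx²`. In the
product rule for `f₃ · W` each derivative of `W` costs a factor `K / Δx`, exactly what each missing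
derivative of `f₃` gains; the total is at most `4 K`.
-/

open Real

/-- The transition function on the unit interval. It agrees with `W 0 1` on `(0, 1)` only. -/
noncomputable def stepFn (t : ℝ) : ℝ := 1 / (Real.exp (1 / t + 1 / (t - 1)) + 1)

/-- The derivative of the exponent `1/t + 1/(t-1)`. -/
noncomputable def stepExpDeriv (t : ℝ) : ℝ := -1 / t ^ 2 + -1 / (t - 1) ^ 2

/-- The second derivative of the exponent `1/t + 1/(t-1)`. -/
noncomputable def stepExpDeriv2 (t : ℝ) : ℝ := 2 / t ^ 3 + 2 / (t - 1) ^ 3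

/-- The derivative of `stepFn` on `(0, 1)`. -/
noncomputable def stepDeriv (t : ℝ) : ℝ := -stepExpDeriv t * (stepFn t * (1 - stepFn t))

/-- The second derivative of `stepFn` on `(0, 1)`. -/
noncomputable def stepDeriv2 (t : ℝ) : ℝ :=
  (-stepExpDeriv2 t + stepExpDeriv t ^ 2 * (1 - 2 * stepFn t)) * (stepFn t * (1 - stepFn t))

lemma hasDerivAt_stepFn {t : ℝ} (h0 : t ≠ 0) (h1 : t - 1 ≠ 0) :
    HasDerivAt stepFn (stepDeriv t) t := by
  have hy : HasDerivAt (fun t : ℝ => 1 / t + 1 / (t - 1)) (stepExpDeriv t) t := by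
    have ha := (hasDerivAt_id t).inv h0
    have hb := ((hasDerivAt_id t).sub_const 1).inv h1
    simpa [stepExpDeriv, one_div, Pi.add_def] using ha.add hb
  have hpos : Real.exp (1 / t + 1 / (t - 1)) + 1 ≠ 0 := by positivity
  have h := (hy.exp.add_const 1).inv hpos
  have h' : HasDerivAt stepFn _ t := h.congr_of_eventuallyEq
    (Filter.Eventually.of_forall fun u => by simp [stepFn])
  convert h' using 1
  simp only [stepDeriv, stepFn]
  field_simp
  ring

lemma hasDerivAt_stepDeriv {t : ℝ} (h0 : t ≠ 0) (h1 : t - 1 ≠ 0) :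
    HasDerivAt stepDeriv (stepDeriv2 t) t := by
  have hs := hasDerivAt_stepFn h0 h1
  have hy : HasDerivAt stepExpDeriv (stepExpDeriv2 t) t := by
    have ha := ((hasDerivAt_id t).pow 2).inv (pow_ne_zero 2 h0)
    have hb := (((hasDerivAt_id t).sub_const 1).pow 2).inv (pow_ne_zero 2 h1)
    have h' : HasDerivAt stepExpDeriv _ t := (ha.add hb).neg.congr_of_eventuallyEq
      (Filter.Eventually.of_forall fun u => by simp [stepExpDeriv]; ring)
    convert h' using 1
    simp only [stepExpDeriv2, id, Pi.pow_apply]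
    field_simp
    norm_num
    field_simp
    ring
  have h := hy.neg.mul (hs.mul (hs.const_sub 1))
  have h' : HasDerivAt stepDeriv _ t := h.congr_of_eventuallyEq
    (Filter.Eventually.of_forall fun u => by simp [stepDeriv])
  convert h' using 1
  simp only [stepDeriv2, stepDeriv, Pi.mul_apply, Pi.neg_apply]
  ring

lemma stepFn_mem (t : ℝ) : 0 < stepFn t ∧ stepFn t < 1 := by
  have := Real.exp_pos (1 / t + 1 / (t - 1))
  unfold stepFn
  refine ⟨by positivity, ?_⟩
  rw [div_lt_one (by positivity)]
  linarith

lemma stepFn_mul_le (t : ℝ) :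
    stepFn t * (1 - stepFn t) ≤ Real.exp (-|1 / t + 1 / (t - 1)|) := by
  unfold stepFn
  generalize 1 / t + 1 / (t - 1) = y
  have hE := Real.exp_pos y
  have key : 1 / (Real.exp y + 1) * (1 - 1 / (Real.exp y + 1))
      = Real.exp y / (Real.exp y + 1) ^ 2 := by field_simp; ring
  rw [key]
  rcases abs_cases y with ⟨h, -⟩ | ⟨h, -⟩ <;> rw [h]
  · rw [Real.exp_neg, div_le_iff₀ (by positivity), inv_mul_eq_div, le_div_iff₀ hE]
    nlinarith
  · rw [neg_neg, div_le_iff₀ (by positivity)]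
    nlinarith [mul_pos hE hE, mul_pos (mul_pos hE hE) hE]

/-- The absolute constant bounding the transition function and its first two derivatives. -/
noncomputable def stepBound : ℝ := 192 * Real.exp 2

lemma one_le_stepBound : 1 ≤ stepBound := by
  have := Real.one_le_exp (x := 2) (by norm_num)
  unfold stepBound; linarith

lemma stepDeriv_bounds {t : ℝ} (h0 : 0 < t) (h1 : t < 1) :
    |stepDeriv t| ≤ stepBound ∧ |stepDeriv2 t| ≤ stepBound := by
  obtain ⟨s0, s1⟩ := stepFn_mem t
  have hp := stepFn_mul_le t
  have hp0 : 0 < stepFn t * (1 - stepFn t) := mul_pos s0 (by linarith)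
  have h1' : 0 < 1 - t := by linarith
  obtain ⟨a, ha⟩ : ∃ a, a = 1 / t := ⟨_, rfl⟩
  obtain ⟨b, hb⟩ : ∃ b, b = 1 / (1 - t) := ⟨_, rfl⟩
  have ha1 : 1 ≤ a := by rw [ha, le_div_iff₀ h0]; linarith
  have hb1 : 1 ≤ b := by rw [hb, le_div_iff₀ h1']; linarith
  have hab : a + b = a * b := by rw [ha, hb]; field_simp; ring
  have ht1 : t - 1 ≠ 0 := by linarith
  have hb' : 1 / (t - 1) = -b := by
    rw [hb, ← neg_sub t 1, one_div_neg_eq_neg_one_div, neg_neg]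
  have hy1 : stepExpDeriv t = -(a ^ 2 + b ^ 2) := by
    have : stepExpDeriv t = -((1 / t) ^ 2 + (1 / (t - 1)) ^ 2) := by
      rw [stepExpDeriv, div_pow, div_pow]; ring
    rw [this, hb', ← ha]; ring
  have hy2 : stepExpDeriv2 t = 2 * a ^ 3 - 2 * b ^ 3 := by
    have : stepExpDeriv2 t = 2 * (1 / t) ^ 3 + 2 * (1 / (t - 1)) ^ 3 := by
      rw [stepExpDeriv2, div_pow, div_pow]; ring
    rw [this, hb', ← ha]; ring
  obtain ⟨M, hM⟩ : ∃ M, M = max a b := ⟨_, rfl⟩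
  have haM : a ≤ M := hM ▸ le_max_left a b
  have hbM : b ≤ M := hM ▸ le_max_right a b
  have hM1 : 1 ≤ M := ha1.trans haM
  rw [hb', ← ha] at hp
  -- `1/a + 1/b = 1` forces the smaller of `a` and `b` to be at most `2`.
  have hyM : M - 2 ≤ |a + -b| := by
    rcases le_total a b with h | h
    · rw [hM, max_eq_right h]
      have : a ≤ 2 := by nlinarith
      have := neg_abs_le (a + -b)
      linarith
    · rw [hM, max_eq_left h]
      have : b ≤ 2 := by nlinarith
      have := le_abs_self (a + -b)
      linarith
  have hpM : stepFn t * (1 - stepFn t) ≤ Real.exp (2 - M) :=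
    hp.trans (Real.exp_le_exp.2 (by linarith))
  have hM4 : M ^ 4 * Real.exp (2 - M) ≤ 24 * Real.exp 2 := by
    have h := Real.pow_div_factorial_le_exp M (by linarith) 4
    norm_num [Nat.factorial] at h
    rw [Real.exp_sub, ← mul_div_assoc, div_le_iff₀ (Real.exp_pos M)]
    nlinarith [Real.exp_pos 2]
  have hpM4 : M ^ 4 * (stepFn t * (1 - stepFn t)) ≤ 24 * Real.exp 2 :=
    (mul_le_mul_of_nonneg_left hpM (by positivity)).trans hM4
  have hle : ∀ c : ℝ, |c| ≤ 8 * M ^ 4 → |c * (stepFn t * (1 - stepFn t))| ≤ stepBound := by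
    intro c hc
    rw [abs_mul, abs_of_pos hp0]
    have := mul_le_mul_of_nonneg_right hc hp0.le
    unfold stepBound
    linarith
  have a2 : a ^ 2 ≤ M ^ 2 := by gcongr
  have b2 : b ^ 2 ≤ M ^ 2 := by gcongr
  have a3 : a ^ 3 ≤ M ^ 3 := by gcongr
  have b3 : b ^ 3 ≤ M ^ 3 := by gcongr
  have M24 : M ^ 2 ≤ M ^ 4 := pow_le_pow_right₀ hM1 (by norm_num)
  have M34 : M ^ 3 ≤ M ^ 4 := pow_le_pow_right₀ hM1 (by norm_num)
  have M0 : 0 ≤ M ^ 2 := by positivity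
  constructor
  · apply hle
    rw [hy1, neg_neg, abs_of_nonneg (by positivity)]
    linarith
  · apply hle
    rw [hy1, hy2]
    have e1 : |-(2 * a ^ 3 - 2 * b ^ 3)| ≤ 4 * M ^ 4 := by
      have : 0 < a ^ 3 := by positivity
      have : 0 < b ^ 3 := by positivity
      rw [abs_le]; constructor <;> linarith
    have e2 : |(-(a ^ 2 + b ^ 2)) ^ 2 * (1 - 2 * stepFn t)| ≤ 4 * M ^ 4 := by
      rw [abs_mul, abs_of_nonneg (by positivity)]
      have q1 : |1 - 2 * stepFn t| ≤ 1 := by rw [abs_le]; constructor <;> linarith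
      have q2 : (-(a ^ 2 + b ^ 2)) ^ 2 ≤ (2 * M ^ 2) ^ 2 := by
        rw [neg_sq]
        gcongr
        linarith
      calc _ ≤ (-(a ^ 2 + b ^ 2)) ^ 2 * 1 := by gcongr
        _ ≤ _ := by nlinarith
    refine (abs_add_le _ _).trans ?_
    linarith

lemma W_eq_stepFn {x₁ Δx x : ℝ} (hΔ : 0 < Δx) (hx : x ∈ Set.Ioo x₁ (x₁ + Δx)) :
    W x₁ Δx x = stepFn ((x - x₁) / Δx) := by
  have hx2 : x < x₁ + Δx := hx.2
  have h : (x - x₁) / Δx - 1 = (x - x₁ - Δx) / Δx := by field_simp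
  rw [W, if_neg (not_le.2 hx.1), if_pos hx2, stepFn, h, one_div_div, one_div_div]

/-- A function vanishing at the left endpoint is bounded by `ε` times the length of the interval
when its derivative is bounded by `ε`. -/
lemma abs_le_of_abs_deriv_le {g : ℝ → ℝ} {x₁ Δx ε : ℝ} (hg : Differentiable ℝ g)
    (h0 : g x₁ = 0) (hb : ∀ x ∈ Set.Icc x₁ (x₁ + Δx), |deriv g x| ≤ ε) :
    ∀ x ∈ Set.Icc x₁ (x₁ + Δx), |g x| ≤ ε * Δx := by
  intro x hx
  have hx₁ : x₁ ∈ Set.Icc x₁ (x₁ + Δx) := ⟨le_rfl, hx.1.trans hx.2⟩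
  have h := (convex_Icc x₁ (x₁ + Δx)).norm_image_sub_le_of_norm_deriv_le
    (fun y _ => hg y) hb hx₁ hx
  have hε : 0 ≤ ε := (abs_nonneg _).trans (hb x hx)
  rw [h0, sub_zero, Real.norm_eq_abs, Real.norm_eq_abs, abs_of_nonneg (sub_nonneg.2 hx.1)] at h
  exact h.trans (mul_le_mul_of_nonneg_left (by linarith [hx.2]) hε)

theorem glued_function_bounds :
    ∃ C : ℝ, 0 < C ∧
      ∀ (x₁ Δx ε : ℝ) (f₃ : ℝ → ℝ), 0 < Δx →
        ContDiff ℝ 2 f₃ → f₃ x₁ = 0 → deriv f₃ x₁ = 0 →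
        (∀ x ∈ Set.Icc x₁ (x₁ + Δx), |deriv (deriv f₃) x| ≤ ε) →
        ∀ x ∈ Set.Ioo x₁ (x₁ + Δx),
          |f₃ x * W x₁ Δx x| ≤ C * ε * Δx ^ 2 ∧
          |deriv (fun x => f₃ x * W x₁ Δx x) x| ≤ C * ε * Δx ∧
          |deriv (deriv (fun x => f₃ x * W x₁ Δx x)) x| ≤ C * ε := by
  have hK := one_le_stepBound
  refine ⟨4 * stepBound, by linarith, ?_⟩
  intro x₁ Δx ε f hΔ hf hf0 hf1 hf2 x hx
  have hd : Differentiable ℝ f := hf.differentiable (by norm_num)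
  have hd' : Differentiable ℝ (deriv f) :=
    ((contDiff_succ_iff_deriv (n := 1)).1
      (by rw [one_add_one_eq_two]; exact hf)).2.2.differentiable (by norm_num)
  have B1 := abs_le_of_abs_deriv_le hd' hf1 hf2
  have B0 := abs_le_of_abs_deriv_le hd hf0 B1
  have hxI := Set.Ioo_subset_Icc_self hx
  have hε : 0 ≤ ε := (abs_nonneg _).trans (hf2 x hxI)
  have hmem : ∀ u ∈ Set.Ioo x₁ (x₁ + Δx), 0 < (u - x₁) / Δx ∧ (u - x₁) / Δx < 1 := by
    intro u hu
    refine ⟨div_pos (by linarith [hu.1]) hΔ, ?_⟩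
    rw [div_lt_one hΔ]; linarith [hu.2]
  have hlin : ∀ u, HasDerivAt (fun u => (u - x₁) / Δx) (1 / Δx) u := fun u =>
    ((hasDerivAt_id u).sub_const x₁).div_const Δx
  have hnhds : ∀ u ∈ Set.Ioo x₁ (x₁ + Δx), ∀ᶠ v in nhds u, v ∈ Set.Ioo x₁ (x₁ + Δx) :=
    fun u hu => isOpen_Ioo.mem_nhds hu
  have D1 : ∀ u ∈ Set.Ioo x₁ (x₁ + Δx), HasDerivAt (fun x => f x * W x₁ Δx x)
      (deriv f u * stepFn ((u - x₁) / Δx) + f u * (stepDeriv ((u - x₁) / Δx) * (1 / Δx))) u := by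
    intro u hu
    obtain ⟨p, q⟩ := hmem u hu
    have hs := (hasDerivAt_stepFn p.ne' (sub_neg.2 q).ne).comp u (hlin u)
    refine ((hd u).hasDerivAt.mul hs).congr_of_eventuallyEq ?_
    filter_upwards [hnhds u hu] with v hv
    simp [W_eq_stepFn hΔ hv]
  have D2 : HasDerivAt (deriv (fun x => f x * W x₁ Δx x))
      (deriv (deriv f) x * stepFn ((x - x₁) / Δx)
        + deriv f x * (stepDeriv ((x - x₁) / Δx) * (1 / Δx))
        + (deriv f x * (stepDeriv ((x - x₁) / Δx) * (1 / Δx))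
        + f x * (stepDeriv2 ((x - x₁) / Δx) * (1 / Δx) * (1 / Δx)))) x := by
    obtain ⟨p, q⟩ := hmem x hx
    have hs := (hasDerivAt_stepFn p.ne' (sub_neg.2 q).ne).comp x (hlin x)
    have hs' := ((hasDerivAt_stepDeriv p.ne' (sub_neg.2 q).ne).comp x (hlin x)).mul_const (1 / Δx)
    refine (((hd' x).hasDerivAt.mul hs).add ((hd x).hasDerivAt.mul hs')).congr_of_eventuallyEq ?_
    filter_upwards [hnhds x hx] with v hv
    simp [(D1 v hv).deriv]
  obtain ⟨p, q⟩ := hmem x hx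
  obtain ⟨k1, k2⟩ := stepDeriv_bounds p q
  obtain ⟨s0, s1⟩ := stepFn_mem ((x - x₁) / Δx)
  have b0 := B0 x hxI
  have b1 := B1 x hxI
  have b2 := hf2 x hxI
  rw [(D1 x hx).deriv, D2.deriv, W_eq_stepFn hΔ hx]
  have k0 : |stepFn ((x - x₁) / Δx)| ≤ 1 := by rw [abs_of_pos s0]; exact s1.le
  generalize stepFn ((x - x₁) / Δx) = s at *
  generalize stepDeriv ((x - x₁) / Δx) = s' at *
  generalize stepDeriv2 ((x - x₁) / Δx) = s'' at *
  generalize stepBound = K at *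
  have prod : ∀ {a b A B : ℝ}, |a| ≤ A → |b| ≤ B → |a * b| ≤ A * B := by
    intro a b A B h h'
    rw [abs_mul]
    exact mul_le_mul h h' (abs_nonneg _) ((abs_nonneg _).trans h)
  have hi : |1 / Δx| ≤ 1 / Δx := (abs_of_pos (by positivity)).le
  have t0 := prod b0 k0
  have t1 := prod b1 k0
  have t2 := prod b2 k0
  have t3 := prod b0 (prod k1 hi)
  have t4 := prod b1 (prod k1 hi)
  have t5 := prod b0 (prod (prod k2 hi) hi)
  have r3 : ε * Δx * Δx * (K * (1 / Δx)) = ε * Δx * K := by field_simp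
  have r4 : ε * Δx * (K * (1 / Δx)) = ε * K := by field_simp
  have r5 : ε * Δx * Δx * (K * (1 / Δx) * (1 / Δx)) = ε * K := by field_simp
  rw [r3] at t3
  rw [r4] at t4
  rw [r5] at t5
  have m0 : ε ≤ ε * K := le_mul_of_one_le_right hε hK
  have m1 : ε * Δx ≤ ε * K * Δx := mul_le_mul_of_nonneg_right m0 hΔ.le
  have m2 : ε * Δx ^ 2 ≤ ε * K * Δx ^ 2 := mul_le_mul_of_nonneg_right m0 (by positivity)
  have n0 : 0 ≤ ε * K := hε.trans m0
  have n1 : 0 ≤ ε * K * Δx := mul_nonneg n0 hΔ.le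
  have n2 : 0 ≤ ε * K * Δx ^ 2 := by positivity
  refine ⟨by linarith, ?_, ?_⟩
  · refine (abs_add_le _ _).trans ?_
    linarith
  · refine (abs_add_le _ _).trans ?_
    have u1 := abs_add_le (deriv (deriv f) x * s) (deriv f x * (s' * (1 / Δx)))
    have u2 := abs_add_le (deriv f x * (s' * (1 / Δx))) (f x * (s'' * (1 / Δx) * (1 / Δx)))
    linarith
end

section
/- Let δ > 0, β > 0, β̂ > 0 be real constants and let C > δβ/β̂. Define u(r) = 1 − exp(Cδ/r) for r < 0. Then for every r ∈ (−δ, 0) and all real numbers R ≥ 0, k > 0, P and Q satisfying P < β·k² and Q > β̂·k², one has R + (1 − u(r)^{−2})·P + 2·u(r)^{−2}·Q·(d/dr) log u(r) > R + 2·(k²/u(r)²)·((C·β̂/δ) − β)·exp(Cδ/r) > 0. -/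
/-!
Write `e = exp (C δ / r) ∈ (0, 1)` and `u = 1 - e`. Multiplying the first inequality by `u ^ 2`,
the `P`-term becomes `-(2 e - e ^ 2) P > -2 e β k ^ 2`, because `2 e - e ^ 2` lies in `(0, 2 e)`.
The logarithmic derivative is `(C δ / r ^ 2) e / (1 - e)`, which exceeds `(C / δ) e` because
`r ^ 2 < δ ^ 2` and `1 - e < 1`; hence the `Q`-term exceeds `2 β̂ k ^ 2 (C / δ) e`. Positivity of
the lower bound is the condition `C > δ β / β̂`.
-/

open Real

theorem hasDerivAt_log_one_sub_exp_div (a r : ℝ) (hr : r ≠ 0) (hu : 1 - Real.exp (a / r) ≠ 0) :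
    HasDerivAt (fun r => Real.log (1 - Real.exp (a / r)))
      (a / r ^ 2 * Real.exp (a / r) / (1 - Real.exp (a / r))) r := by
  have h1 : HasDerivAt (fun r : ℝ => a / r) (-a / r ^ 2) r := by
    simpa [div_eq_mul_inv] using (hasDerivAt_inv hr).const_mul a
  convert (h1.exp.const_sub 1).log hu using 1
  ring

theorem deformed_Ricci_positive (δ β βhat C : ℝ)
    (hδ : 0 < δ) (hβ : 0 < β) (hβhat : 0 < βhat) (hC : C > δ * β / βhat) :
    ∀ r ∈ Set.Ioo (-δ) (0 : ℝ), ∀ R k P Q : ℝ,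
      R ≥ 0 → 0 < k → P < β * k ^ 2 → Q > βhat * k ^ 2 →
      (R + (1 - (1 - Real.exp (C * δ / r)) ^ (-2 : ℤ)) * P +
          2 * (1 - Real.exp (C * δ / r)) ^ (-2 : ℤ) * Q *
            deriv (fun r => Real.log (1 - Real.exp (C * δ / r))) r >
        R + 2 * (k ^ 2 / (1 - Real.exp (C * δ / r)) ^ 2) *
          ((C * βhat / δ) - β) * Real.exp (C * δ / r)) ∧
      (R + 2 * (k ^ 2 / (1 - Real.exp (C * δ / r)) ^ 2) *
          ((C * βhat / δ) - β) * Real.exp (C * δ / r) > 0) := by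
  intro r hr R k P Q hR hk hP hQ
  obtain ⟨hr1, hr2⟩ := hr
  have hC0 : 0 < C := lt_trans (by positivity) hC
  have he1 : Real.exp (C * δ / r) < 1 := by
    rw [Real.exp_lt_one_iff]
    exact div_neg_of_pos_of_neg (by positivity) hr2
  have hD := (hasDerivAt_log_one_sub_exp_div (C * δ) r hr2.ne (by linarith)).deriv
  rw [hD]
  have he0 := Real.exp_pos (C * δ / r)
  generalize Real.exp (C * δ / r) = e at *
  have hu : 0 < 1 - e := by linarith
  have hk2 : 0 < k ^ 2 := by positivity
  have hCβ : 0 < C * βhat / δ - β := by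
    have h : δ * β < C * βhat := (div_lt_iff₀ hβhat).1 hC
    rw [sub_pos, lt_div_iff₀ hδ]
    linarith
  refine ⟨?_, by positivity⟩
  have hlog : C / δ * e < C * δ / r ^ 2 * e / (1 - e) := by
    have hr0 : 0 < r ^ 2 := by nlinarith
    have h1 : C / δ < C * δ / r ^ 2 := by
      rw [div_lt_div_iff₀ hδ hr0]
      nlinarith [mul_pos hC0 (show 0 < δ ^ 2 - r ^ 2 by nlinarith)]
    rw [lt_div_iff₀ hu]
    have h2 : 0 < C / δ * e := by positivity
    nlinarith
  generalize C * δ / r ^ 2 * e / (1 - e) = D at *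
  have hPterm : (2 * e - e ^ 2) * P < 2 * e * (β * k ^ 2) := by
    have h1 : 0 < 2 * e - e ^ 2 := by nlinarith
    have h2 : 0 < e ^ 2 * (β * k ^ 2) := by positivity
    nlinarith [mul_lt_mul_of_pos_left hP h1]
  have hQterm : βhat * k ^ 2 * (C / δ * e) < Q * D :=
    mul_lt_mul'' hQ hlog (by positivity) (by positivity)
  have hdiff : (R + (1 - (1 - e) ^ (-2 : ℤ)) * P + 2 * (1 - e) ^ (-2 : ℤ) * Q * D) -
      (R + 2 * (k ^ 2 / (1 - e) ^ 2) * (C * βhat / δ - β) * e) =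
      ((2 * e * (β * k ^ 2) - (2 * e - e ^ 2) * P) +
        2 * (Q * D - βhat * k ^ 2 * (C / δ * e))) / (1 - e) ^ 2 := by
    have hz : (1 - e) ^ (-2 : ℤ) = ((1 - e) ^ 2)⁻¹ := by
      rw [zpow_neg]
      norm_cast
    rw [hz]
    field_simp
    ring
  rw [gt_iff_lt, ← sub_pos, hdiff]
  exact div_pos (by linarith) (by positivity)
end
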